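/- Let A, B, D be finite sets with B ⊆ D and A ∩ (D \ B) = ∅ (equivalently A ∩ D = A ∩ B), let m ≥ 1 be a natural number (the number of policies in the merged guard D), and let c_r ≥ 0 and c_e ≥ 0 be real constants. If merging A with B is not beneficial, i.e. |A ∩ B| · (c_r + c_e) ≤ c_e · |A ∪ B|, then merging A into the accumulated merged guard D is not beneficial either: |A ∪ D| · (c_r + (m+1)·c_e) ≥ |A| · (c_r + c_e) + |D| · (c_r + m·c_e). -/

import Mathlib

/-!
Merging a guard `A` with `k` policies into a guard `D` with `m` policies saves one read for each
tuple of `A ∩ D`, and costs `m` extra policy evaluations on each tuple of `A \ D` and `k` on each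
tuple of `D \ A`. Passing from `B` to the accumulation `D` changes neither `A ∩ B` nor `A \ B`,
so the saving stays the same, while the extra evaluations can only increase.
-/

section GuardCost

open Finset

variable {α R : Type*} [CommRing R]

/-- The cost of evaluating a guarded expression: each of the tuples `G` satisfying the guard is read
at cost `c_r` and checked against the `m` policies of the partition at cost `c_e` each. The number
of policies is taken in the ring of costs, to avoid casts. -/
def guardCost (c_r c_e : R) (G : Finset α) (m : R) : R :=
  #G * (c_r + m * c_e)

variable [DecidableEq α]

theorem guardCost_union_sub (c_r c_e : R) (A D : Finset α) (k m : R) :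
    guardCost c_r c_e (A ∪ D) (m + k) - (guardCost c_r c_e A k + guardCost c_r c_e D m) =
      c_e * (m * #(A \ D) + k * #(D \ A)) - c_r * #(A ∩ D) := by
  have card_A : (#A : R) = #(A \ D) + #(A ∩ D) := by
    rw [← Nat.cast_add, card_sdiff_add_card_inter]
  have card_D : (#D : R) = #(D \ A) + #(A ∩ D) := by
    rw [← Nat.cast_add, inter_comm, card_sdiff_add_card_inter]
  have card_union : (#(A ∪ D) : R) = #(A \ D) + #D := by
    rw [← Nat.cast_add, card_sdiff_add_card]
  simp only [guardCost, card_union, card_A, card_D]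
  ring

variable [PartialOrder R] {c_r c_e : R} {A B D : Finset α} {k m n : R}

theorem guardCost_add_le_guardCost_union_iff [IsOrderedAddMonoid R] :
    guardCost c_r c_e A k + guardCost c_r c_e D m ≤ guardCost c_r c_e (A ∪ D) (m + k) ↔
      c_r * #(A ∩ D) ≤ c_e * (m * #(A \ D) + k * #(D \ A)) := by
  rw [← sub_nonneg, guardCost_union_sub, sub_nonneg]

theorem guardCost_one_add_le_guardCost_union_iff [IsOrderedAddMonoid R] :
    guardCost c_r c_e A 1 + guardCost c_r c_e B 1 ≤ guardCost c_r c_e (A ∪ B) (1 + 1) ↔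
      #(A ∩ B) * (c_r + c_e) ≤ c_e * #(A ∪ B) := by
  have card_add : (#A : R) + #B = #(A ∪ B) + #(A ∩ B) := by
    rw [← Nat.cast_add, ← Nat.cast_add, card_union_add_card_inter]
  have excess_eq : guardCost c_r c_e (A ∪ B) (1 + 1) -
      (guardCost c_r c_e A 1 + guardCost c_r c_e B 1) =
        c_e * #(A ∪ B) - #(A ∩ B) * (c_r + c_e) := by
    simp only [guardCost]
    linear_combination -(c_r + c_e) * card_add
  rw [← sub_nonneg, excess_eq, sub_nonneg]

theorem accumulated_merge_not_beneficial_general [IsOrderedRing R] (hBD : B ⊆ D)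
    (hA : Disjoint A (D \ B)) (hk : 0 ≤ k) (hnm : n ≤ m) (hce : 0 ≤ c_e)
    (hAB : guardCost c_r c_e A k + guardCost c_r c_e B n ≤ guardCost c_r c_e (A ∪ B) (n + k)) :
    guardCost c_r c_e A k + guardCost c_r c_e D m ≤ guardCost c_r c_e (A ∪ D) (m + k) := by
  rw [guardCost_add_le_guardCost_union_iff] at hAB ⊢
  have inter_eq : A ∩ D = A ∩ B := by
    rw [← union_sdiff_of_subset hBD, inter_union_distrib_left,
      disjoint_iff_inter_eq_empty.1 hA, union_empty]
  have sdiff_eq : A \ D = A \ B := by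
    rw [← sdiff_inter_self_left, inter_eq, sdiff_inter_self_left]
  calc c_r * #(A ∩ D) = c_r * #(A ∩ B) := by rw [inter_eq]
    _ ≤ c_e * (n * #(A \ B) + k * #(B \ A)) := hAB
    _ ≤ c_e * (m * #(A \ B) + k * #(D \ A)) := by gcongr
    _ = c_e * (m * #(A \ D) + k * #(D \ A)) := by rw [sdiff_eq]

end GuardCost

/-- Corollary 2 of the paper: if merging `A` with `B` is not beneficial, then
merging `A` into an accumulated merged guard `D` (with `B ⊆ D`, `m ≥ 1`
policies, and `A` intersecting `D` only inside `B`) is not beneficial. -/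
theorem accumulated_merge_not_beneficial
    {α : Type*} [DecidableEq α] (A B D : Finset α)
    (hBD : B ⊆ D) (hA : A ∩ (D \ B) = ∅)
    (m : ℕ) (hm : 1 ≤ m)
    (c_r c_e : ℝ) (hcr : 0 ≤ c_r) (hce : 0 ≤ c_e)
    (hAB : ((A ∩ B).card : ℝ) * (c_r + c_e) ≤ c_e * ((A ∪ B).card : ℝ)) :
    ((A ∪ D).card : ℝ) * (c_r + ((m : ℝ) + 1) * c_e) ≥
      (A.card : ℝ) * (c_r + c_e) + (D.card : ℝ) * (c_r + (m : ℝ) * c_e) := by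
  have merge_D := accumulated_merge_not_beneficial_general hBD
    (Finset.disjoint_iff_inter_eq_empty.2 hA) zero_le_one (Nat.one_le_cast.2 hm) hce
    (guardCost_one_add_le_guardCost_union_iff.2 hAB)
  simpa only [guardCost, one_mul] using merge_D
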